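/- Let J be a finite index set and for each j ∈ J let A_j = A_j⁺ + A_j⁻ be complex n×n matrices with A_j⁺ Hermitian positive semidefinite and A_j⁻ Hermitian negative semidefinite, and let c_j ∈ ℝ. Let f : ℂⁿ → ℝ be any cost function. Suppose z ∈ ℂⁿ is feasible for the original constraints, i.e., Re(zᴴ A_j z) ≤ c_j for all j ∈ J, and suppose v minimizes f over the surrogate feasible set S(z) := { w ∈ ℂⁿ : g_j(w; z) ≤ c_j for all j ∈ J }. Then v is feasible for the original constraints (Re(vᴴ A_j v) ≤ c_j for all j ∈ J) and f(v) ≤ f(z). Hence the SCA iteration started from a feasible point produces feasible iterates with nonincreasing cost. -/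

import Mathlib

open Matrix
open scoped ComplexOrder

/-- A complex matrix is negative semidefinite if its negation is positive
semidefinite. -/
def Matrix.NegSemidef' {n : ℕ} (A : Matrix (Fin n) (Fin n) ℂ) : Prop :=
  (-A).PosSemidef

/-- The FPP-SCA surrogate `g(v; z)` of the quadratic `Re(vᴴ A v)` for the
decomposition `A = A⁺ + A⁻`. -/
noncomputable def surrogate {n : ℕ} (Ap An : Matrix (Fin n) (Fin n) ℂ)
    (z v : Fin n → ℂ) : ℝ :=
  (star v ⬝ᵥ (Ap *ᵥ v)).re + 2 * (star z ⬝ᵥ (An *ᵥ v)).re - (star z ⬝ᵥ (An *ᵥ z)).re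

/-!
For Hermitian `A⁻` the surrogate differs from the true quadratic by exactly the remainder of the
linearisation of its `A⁻` part: `q(v) = g(v; z) + Re((v - z)ᴴ A⁻ (v - z))`. If `A⁻` is negative
semidefinite, `g(·; z)` therefore majorises `q` and touches it at `z`: surrogate feasibility
implies feasibility, and a feasible `z` is itself a candidate in the surrogate problem.
-/

section QuadraticForm

lemma star_star_dotProduct_mulVec {m n α : Type*} [Fintype m] [Fintype n]
    [NonUnitalSemiring α] [StarRing α] (A : Matrix m n α) (x : m → α) (y : n → α) :
    star (star x ⬝ᵥ (A *ᵥ y)) = star y ⬝ᵥ (Aᴴ *ᵥ x) := by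
  rw [← star_dotProduct_star, star_star, star_mulVec, ← dotProduct_mulVec]

variable {𝕜 ι : Type*} [RCLike 𝕜] [Fintype ι] {A : Matrix ι ι 𝕜}

lemma re_star_dotProduct_mulVec_comm (hA : A.IsHermitian) (x y : ι → 𝕜) :
    RCLike.re (star x ⬝ᵥ (A *ᵥ y)) = RCLike.re (star y ⬝ᵥ (A *ᵥ x)) := by
  rw [← RCLike.conj_re, starRingEnd_apply, star_star_dotProduct_mulVec, hA.eq]

lemma re_star_sub_dotProduct_mulVec_sub (hA : A.IsHermitian) (x y : ι → 𝕜) :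
    RCLike.re (star (x - y) ⬝ᵥ (A *ᵥ (x - y))) =
      RCLike.re (star x ⬝ᵥ (A *ᵥ x)) - 2 * RCLike.re (star y ⬝ᵥ (A *ᵥ x)) +
        RCLike.re (star y ⬝ᵥ (A *ᵥ y)) := by
  simp only [star_sub, mulVec_sub, dotProduct_sub, sub_dotProduct, map_sub]
  rw [re_star_dotProduct_mulVec_comm hA x y]
  ring

end QuadraticForm

section Surrogate

variable {n : ℕ} {An : Matrix (Fin n) (Fin n) ℂ}

lemma isHermitian_of_negSemidef' (hAn : An.NegSemidef') : An.IsHermitian :=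
  isHermitian_neg_iff.mp hAn.isHermitian

lemma re_star_dotProduct_mulVec_nonpos (hAn : An.NegSemidef') (x : Fin n → ℂ) :
    (star x ⬝ᵥ (An *ᵥ x)).re ≤ 0 := by
  have h : 0 ≤ (star x ⬝ᵥ ((-An) *ᵥ x)).re := PosSemidef.re_dotProduct_nonneg hAn x
  rwa [neg_mulVec, dotProduct_neg, Complex.neg_re, neg_nonneg] at h

lemma surrogate_self (Ap An : Matrix (Fin n) (Fin n) ℂ) (z : Fin n → ℂ) :
    surrogate Ap An z z = (star z ⬝ᵥ ((Ap + An) *ᵥ z)).re := by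
  rw [surrogate, add_mulVec, dotProduct_add, Complex.add_re]
  ring

lemma surrogate_add_re_star_sub_dotProduct_mulVec_sub (Ap : Matrix (Fin n) (Fin n) ℂ)
    (hAn : An.IsHermitian) (z v : Fin n → ℂ) :
    surrogate Ap An z v + (star (v - z) ⬝ᵥ (An *ᵥ (v - z))).re =
      (star v ⬝ᵥ ((Ap + An) *ᵥ v)).re := by
  have hexpand : (star (v - z) ⬝ᵥ (An *ᵥ (v - z))).re =
      (star v ⬝ᵥ (An *ᵥ v)).re - 2 * (star z ⬝ᵥ (An *ᵥ v)).re + (star z ⬝ᵥ (An *ᵥ z)).re :=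
    re_star_sub_dotProduct_mulVec_sub hAn v z
  rw [surrogate, hexpand, add_mulVec, dotProduct_add, Complex.add_re]
  ring

lemma re_star_dotProduct_add_mulVec_le_surrogate (Ap : Matrix (Fin n) (Fin n) ℂ)
    (hAn : An.NegSemidef') (z v : Fin n → ℂ) :
    (star v ⬝ᵥ ((Ap + An) *ᵥ v)).re ≤ surrogate Ap An z v := by
  rw [← surrogate_add_re_star_sub_dotProduct_mulVec_sub Ap (isHermitian_of_negSemidef' hAn) z v]
  exact add_le_of_nonpos_right (re_star_dotProduct_mulVec_nonpos hAn (v - z))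

end Surrogate

theorem stmt14_general {n : ℕ} {J β : Type*} [Preorder β]
    (A Ap An : J → Matrix (Fin n) (Fin n) ℂ) (c : J → ℝ)
    (hsum : ∀ j, A j = Ap j + An j) (hAn : ∀ j, (An j).NegSemidef')
    (f : (Fin n → ℂ) → β) (z v : Fin n → ℂ)
    (hzfeas : ∀ j, (star z ⬝ᵥ ((A j) *ᵥ z)).re ≤ c j)
    (hvmem : ∀ j, surrogate (Ap j) (An j) z v ≤ c j)
    (hvmin : ∀ w : Fin n → ℂ, (∀ j, surrogate (Ap j) (An j) z w ≤ c j) → f v ≤ f w) :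
    (∀ j, (star v ⬝ᵥ ((A j) *ᵥ v)).re ≤ c j) ∧ f v ≤ f z := by
  simp only [hsum] at hzfeas ⊢
  have hzmem (j : J) : surrogate (Ap j) (An j) z z ≤ c j :=
    (surrogate_self (Ap j) (An j) z).trans_le (hzfeas j)
  have hvfeas (j : J) : (star v ⬝ᵥ ((Ap j + An j) *ᵥ v)).re ≤ c j :=
    (re_star_dotProduct_add_mulVec_le_surrogate (Ap j) (hAn j) z v).trans (hvmem j)
  exact ⟨hvfeas, hvmin z hzmem⟩

/-- If `z` is feasible for the original constraints and `v`
minimizes the cost `f` over the surrogate feasible set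
`S(z) := { w : g_j(w; z) ≤ c_j ∀ j }`, then `v` is feasible for the original
constraints and `f(v) ≤ f(z)`.  Hence the SCA iteration started from a
feasible point produces feasible iterates with nonincreasing cost. -/
theorem stmt14 (n : ℕ) (J : Type*) [Fintype J]
    (A Ap An : J → Matrix (Fin n) (Fin n) ℂ) (c : J → ℝ)
    (hsum : ∀ j, A j = Ap j + An j)
    (hAp : ∀ j, (Ap j).PosSemidef) (hAn : ∀ j, (An j).NegSemidef')
    (f : (Fin n → ℂ) → ℝ) (z v : Fin n → ℂ)
    (hzfeas : ∀ j, (star z ⬝ᵥ ((A j) *ᵥ z)).re ≤ c j)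
    (hvmem : ∀ j, surrogate (Ap j) (An j) z v ≤ c j)
    (hvmin : ∀ w : Fin n → ℂ, (∀ j, surrogate (Ap j) (An j) z w ≤ c j) → f v ≤ f w) :
    (∀ j, (star v ⬝ᵥ ((A j) *ᵥ v)).re ≤ c j) ∧ f v ≤ f z :=
  stmt14_general A Ap An c hsum hAn f z v hzfeas hvmem hvmin
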